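/- Let X be a proper, connected, geodesically complete CAT(0) space, x ∈ X, ξ, η ∈ ∂X. Define m_x(ξ,η) := sup{ m : h_{−m} ∩ h'_{−m} ≠ ∅ }, where h_{−m} (resp. h'_{−m}) is the horoball centered at ξ (resp. η) consisting of points y with B(x,y,ξ) ≤ −m (resp. B(x,y,η) ≤ −m). Then (ξ|η)_x = m_x(ξ,η). Moreover, if (ξ,η) is visible, then every bi-infinite geodesic from ξ to η contains a point of ∂h_{−m_x(ξ,η)} ∩ ∂h'_{−m_x(ξ,η)}, and every point of h_{−m_x(ξ,η)} ∩ h'_{−m_x(ξ,η)} lies on some bi-infinite geodesic from ξ to η. -/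

import Mathlib

/-!
The Gromov product is compared with horoballs through midpoints. For `t ≥ 0` the midpoint of
`ξ_x(t)` and `η_x(t)` lies in both horoballs at level `t - d(ξ_x(t), η_x(t)) / 2`, because the
Busemann function is an infimum of `d(·, ξ_x(t)) - t`; conversely a point of both horoballs at
level `m` bounds `d(ξ_x(t), η_x(t))` by `2 (t - m) + o(1)` through the triangle inequality. This
gives `gromov_eq_mSup`; it only needs the rays `ξ_x`, `η_x` to exist. Their existence is
`exists_asymptotic_ray`, an ultralimit of segments controlled by the convexity of the CAT(0) metric.

For visible pairs the main fact is that Busemann functions of asymptotic rays differ by a constant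
(`bus_eq_add`). One ingredient is `bus_along`: along a ray to `ξ` the function `B(x,·,ξ)` plus arc
length is midpoint convex, nondecreasing and bounded above, hence constant. It shows that each of
the two Busemann functions is at most the other plus a constant, and the quadrilateral inequality
`sq_dist_add_sq_dist_le` shows that these two constants cancel. Consequently
`B(x,·,ξ) + B(x,·,η)` attains its minimum `-2m` on every line from `ξ` to `η` (`bus_add_bus_ge`).
Along such a line the two summands have slopes `1` and `-1`, so they agree at some point, with
common value `-m`, and minimality identifies `m` with `m_x(ξ,η)`. Finally, a point `p` of both
horoballs at level `m` is a minimum of the sum. Along the concatenation of the rays from `p` to `ξ`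
and to `η` the 1-Lipschitz function `B(x,·,ξ)` then grows at unit speed, so that the concatenation
is a geodesic line (`isGeodesicLine_concat`).
-/

noncomputable section

open Filter Topology Set Classical
open scoped ENNReal NNReal

namespace Paper

variable {X : Type*} [MetricSpace X]

/-- A geodesic ray: a unit-speed isometric embedding of `[0, ∞)` (only the values for
nonnegative times matter). -/
def IsGeodesicRay (γ : ℝ → X) : Prop :=
  ∀ s t : ℝ, 0 ≤ s → 0 ≤ t → dist (γ s) (γ t) = |s - t|

/-- A bi-infinite geodesic: a unit-speed isometric embedding of `ℝ`. -/
def IsGeodesicLine (γ : ℝ → X) : Prop :=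
  ∀ s t : ℝ, dist (γ s) (γ t) = |s - t|

theorem IsGeodesicLine.ray {γ : ℝ → X} (h : IsGeodesicLine γ) : IsGeodesicRay γ :=
  fun s t _ _ => h s t

theorem IsGeodesicLine.rayNeg {γ : ℝ → X} (h : IsGeodesicLine γ) :
    IsGeodesicRay fun t => γ (-t) := by
  intro s t _ _
  show dist (γ (-s)) (γ (-t)) = |s - t|
  rw [h (-s) (-t), neg_sub_neg, abs_sub_comm]

/-- A geodesic metric space: any two points are joined by a geodesic segment. -/
def GeodesicSpace (X : Type*) [MetricSpace X] : Prop :=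
  ∀ x y : X, ∃ γ : ℝ → X, γ 0 = x ∧ γ (dist x y) = y ∧
    ∀ s ∈ Set.Icc (0 : ℝ) (dist x y), ∀ t ∈ Set.Icc (0 : ℝ) (dist x y),
      dist (γ s) (γ t) = |s - t|

/-- CAT(0) space: a geodesic space satisfying the CN (Bruhat–Tits) inequality. -/
def CAT0Space (X : Type*) [MetricSpace X] : Prop :=
  GeodesicSpace X ∧
    ∀ x y z m : X, dist y m = dist y z / 2 → dist m z = dist y z / 2 →
      dist x m ^ 2 ≤ dist x y ^ 2 / 2 + dist x z ^ 2 / 2 - dist y z ^ 2 / 4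

/-- Geodesic completeness: every geodesic segment extends to a bi-infinite geodesic line. -/
def GeodesicallyComplete (X : Type*) [MetricSpace X] : Prop :=
  ∀ (γ : ℝ → X) (a b : ℝ), a < b →
    (∀ s ∈ Set.Icc a b, ∀ t ∈ Set.Icc a b, dist (γ s) (γ t) = |s - t|) →
    ∃ δ : ℝ → X, IsGeodesicLine δ ∧ ∀ t ∈ Set.Icc a b, δ t = γ t

/-- The space of geodesic rays in `X`. -/
def RaySpace (X : Type*) [MetricSpace X] : Type _ := {γ : ℝ → X // IsGeodesicRay γ}

/-- Rays are asymptotic if they stay at bounded distance from each other. -/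
instance raySetoid (X : Type*) [MetricSpace X] : Setoid (RaySpace X) where
  r γ γ' := ∃ C : ℝ, ∀ t : ℝ, 0 ≤ t → dist (γ.1 t) (γ'.1 t) ≤ C
  iseqv := by
    constructor
    · intro γ; exact ⟨0, fun t _ => by simp⟩
    · rintro γ γ' ⟨C, hC⟩
      exact ⟨C, fun t ht => by rw [dist_comm]; exact hC t ht⟩
    · rintro γ γ' γ'' ⟨C, hC⟩ ⟨D, hD⟩
      exact ⟨C + D, fun t ht => (dist_triangle (γ.1 t) (γ'.1 t) (γ''.1 t)).trans
        (add_le_add (hC t ht) (hD t ht))⟩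

/-- The boundary at infinity: asymptoticity classes of geodesic rays. -/
def Boundary (X : Type*) [MetricSpace X] : Type _ := Quotient (raySetoid X)

/-- The point at infinity represented by a geodesic ray. -/
def boundaryPoint {γ : ℝ → X} (h : IsGeodesicRay γ) : Boundary X :=
  Quotient.mk (raySetoid X) ⟨γ, h⟩

/-- The geodesic ray issuing from `x` representing `ξ` (chosen; in a proper geodesically
complete CAT(0) space it exists and is unique). -/
def rayFrom (x : X) (ξ : Boundary X) : ℝ → X :=
  if h : ∃ γ : ℝ → X, γ 0 = x ∧ ∃ hγ : IsGeodesicRay γ, boundaryPoint hγ = ξ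
  then h.choose else fun _ => x

/-- The Gromov product `(ξ|η)_x ∈ [0,∞]`, defined as the (monotone) limit
`lim_{t→∞} (t - d(ξ_x(t), η_x(t))/2)`, i.e. the supremum over nonnegative times. -/
def gromov (x : X) (ξ η : Boundary X) : EReal :=
  ⨆ (t : ℝ) (_ : 0 ≤ t),
    ((t - dist (rayFrom x ξ t) (rayFrom x η t) / 2 : ℝ) : EReal)

/-- `ρ_x(ξ,η) = e^{-(ξ|η)_x}`, with `e^{-∞} = 0`. -/
def rho (x : X) (ξ η : Boundary X) : ℝ :=
  if gromov x ξ η = ⊤ then 0 else Real.exp (-(gromov x ξ η).toReal)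

/-- A pair of boundary points is algebraically visible w.r.t. the base point `x` if their
Gromov product is finite. -/
def AVisible (x : X) (ξ η : Boundary X) : Prop := gromov x ξ η ≠ ⊤

/-- Algebraic visibility (with respect to every base point; this is base-point independent). -/
def AVis {X : Type*} [MetricSpace X] (ξ η : Boundary X) : Prop :=
  ∀ x : X, gromov x ξ η ≠ ⊤

/-- The cross ratio with base point `x`, valued in `[0,∞]`. -/
def crX (x : X) (ξ₁ ξ₂ ξ₃ ξ₄ : Boundary X) : ℝ≥0∞ :=
  (ENNReal.ofReal (rho x ξ₁ ξ₂) * ENNReal.ofReal (rho x ξ₃ ξ₄)) /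
    (ENNReal.ofReal (rho x ξ₁ ξ₃) * ENNReal.ofReal (rho x ξ₂ ξ₄))

/-- A quadruple is admissible if among any three of its members, at least two of the three
pairs are algebraically visible. -/
def AdmissibleQuad (x : X) (q : Fin 4 → Boundary X) : Prop :=
  ∀ i j k : Fin 4, i ≠ j → j ≠ k → i ≠ k →
    ((AVisible x (q i) (q j) ∧ AVisible x (q i) (q k)) ∨
     (AVisible x (q i) (q j) ∧ AVisible x (q j) (q k)) ∨
     (AVisible x (q i) (q k) ∧ AVisible x (q j) (q k)))

/-- The Busemann function `B(x,y,ξ) = lim_{t→∞} (d(y,ξ_x(t)) - d(x,ξ_x(t)))`;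
the function is non-increasing and bounded, so the limit is the infimum. -/
def busemann (x y : X) (ξ : Boundary X) : ℝ :=
  ⨅ t : {t : ℝ // 0 ≤ t}, (dist y (rayFrom x ξ t.1) - dist x (rayFrom x ξ t.1))

/-- The visual topology on the boundary at infinity, generated by the sets
`U_{R,ε,x}(ξ) = {η | d(η_x(R), ξ_x(R)) < ε}`. -/
def visualTopology (X : Type*) [MetricSpace X] : TopologicalSpace (Boundary X) :=
  TopologicalSpace.generateFrom
    { U | ∃ (x : X) (ξ : Boundary X) (R ε : ℝ), 0 < ε ∧
        U = { η : Boundary X | dist (rayFrom x η R) (rayFrom x ξ R) < ε } }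

/-- A pair of boundary points is visible if some bi-infinite geodesic has them as its two
endpoints at infinity. -/
def VisiblePair (ξ η : Boundary X) : Prop :=
  ∃ (γ : ℝ → X) (h : IsGeodesicLine γ),
    boundaryPoint h.rayNeg = ξ ∧ boundaryPoint h.ray = η

/-- A geodesic bounds a flat half-plane if there is an isometric embedding of the Euclidean
half-plane whose boundary line is the given geodesic. -/
def BoundsFlatHalfPlane (γ : ℝ → X) : Prop :=
  ∃ φ : ℝ × ℝ → X,
    (∀ p q : ℝ × ℝ, 0 ≤ p.2 → 0 ≤ q.2 →
      dist (φ p) (φ q) = Real.sqrt ((p.1 - q.1) ^ 2 + (p.2 - q.2) ^ 2)) ∧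
    ∀ t : ℝ, φ (t, 0) = γ t

/-- Two boundary points are connected by a rank 1 geodesic. -/
def RankOneConnected (ξ η : Boundary X) : Prop :=
  ∃ (γ : ℝ → X) (h : IsGeodesicLine γ), ¬ BoundsFlatHalfPlane γ ∧
    boundaryPoint h.rayNeg = ξ ∧ boundaryPoint h.ray = η

/-- `ξ` is in a rank 1 hinge. -/
def RankOneHinge (ξ : Boundary X) : Prop :=
  ∃ η ζ : Boundary X, AVis η ζ ∧ RankOneConnected ξ η ∧ RankOneConnected ξ ζ

/-- The boundary of `X` satisfies the 4-visibility condition (4v). -/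
def FourVisBoundary (X : Type*) [MetricSpace X] : Prop :=
  ∀ ξ₁ ξ₂ ξ₃ ξ₄ : Boundary X, ∃ η : Boundary X,
    AVis ξ₁ η ∧ AVis ξ₂ η ∧ AVis ξ₃ η ∧ AVis ξ₄ η

/-- `ρ_x` as an `ℝ≥0∞`-valued kernel. -/
def rhoE (x : X) (ξ η : Boundary X) : ℝ≥0∞ := ENNReal.ofReal (rho x ξ η)

end Paper

namespace Paper

/-- `m_x(ξ,η) := sup { m | h_{-m} ∩ h'_{-m} ≠ ∅ }` for the horoballs
`h_{-m} = {y | B(x,y,ξ) ≤ -m}` and `h'_{-m} = {y | B(x,y,η) ≤ -m}`. -/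
noncomputable def mSup {X : Type*} [MetricSpace X] (x : X) (ξ η : Boundary X) : EReal :=
  ⨆ (m : ℝ) (_ : ∃ y : X, busemann x y ξ ≤ -m ∧ busemann x y η ≤ -m), (m : EReal)

section Aux

variable {X : Type*} [MetricSpace X]

/-! ### Midpoint convexity in CAT(0) spaces -/

/-- `m` is a metric midpoint of `a` and `b`. -/
def IsMid (m a b : X) : Prop := dist a m = dist a b / 2 ∧ dist m b = dist a b / 2

theorem exists_isMid (h : GeodesicSpace X) (a b : X) : ∃ m, IsMid m a b := by
  obtain ⟨γ, h0, h1, hγ⟩ := h a b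
  have hd : 0 ≤ dist a b := dist_nonneg
  have e1 := hγ 0 ⟨le_rfl, hd⟩ (dist a b / 2) ⟨by linarith, by linarith⟩
  have e2 := hγ (dist a b / 2) ⟨by linarith, by linarith⟩ (dist a b) ⟨hd, le_rfl⟩
  rw [h0, abs_sub_comm, abs_of_nonneg (by linarith)] at e1
  rw [h1, abs_sub_comm, abs_of_nonneg (by linarith)] at e2
  exact ⟨γ (dist a b / 2), by linarith, by linarith⟩

/-- The distance to a fixed point is midpoint convex. -/
theorem dist_mid_le (h : CAT0Space X) (y : X) {m a b : X} (hm : IsMid m a b) :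
    dist y m ≤ (dist y a + dist y b) / 2 := by
  have h1 := h.2 y a b m hm.1 hm.2
  -- The CN inequality is weakened by bounding `dist a b` below by `|dist y a - dist y b|`.
  have h2 : (dist y a - dist y b) ^ 2 ≤ dist a b ^ 2 := by
    rw [sq_le_sq, abs_of_nonneg (dist_nonneg (x := a) (y := b)), dist_comm y a, dist_comm y b]
    exact abs_dist_sub_le a b y
  have h3 : (0 : ℝ) ≤ dist y a + dist y b := by positivity
  apply le_of_sq_le_sq _ (by linarith)
  nlinarith

/-- In a triangle the segment joining the midpoints of two sides is at most half as long as the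
third side. -/
theorem dist_mid_mid_le_half (h : CAT0Space X) {o p q m n : X} (hm : IsMid m o p)
    (hn : IsMid n o q) : dist m n ≤ dist p q / 2 := by
  have h1 := h.2 n o p m hm.1 hm.2
  have h2 := h.2 p o q n hn.1 hn.2
  have h3 := hn.1
  apply le_of_sq_le_sq _ (by positivity)
  rw [dist_comm n o, h3, dist_comm n p, dist_comm n m] at h1
  rw [dist_comm p o] at h2
  nlinarith

/-- The metric is midpoint convex along pairs of geodesics; a diagonal splits the quadrilateral
into two triangles. -/
theorem dist_mid_mid_le (h : CAT0Space X) {a b a' b' m m' : X} (hm : IsMid m a b)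
    (hm' : IsMid m' a' b') : dist m m' ≤ (dist a a' + dist b b') / 2 := by
  obtain ⟨k, hk⟩ := exists_isMid h.1 a b'
  have h1 := dist_mid_mid_le_half h hm hk
  have hk2 : IsMid k b' a := ⟨by rw [dist_comm b' k, dist_comm b' a]; exact hk.2,
    by rw [dist_comm k a, dist_comm b' a]; exact hk.1⟩
  have hm2 : IsMid m' b' a' := ⟨by rw [dist_comm b' m', dist_comm b' a']; exact hm'.2,
    by rw [dist_comm m' a', dist_comm b' a']; exact hm'.1⟩
  have h2 := dist_mid_mid_le_half h hk2 hm2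
  linarith [dist_triangle m k m']

/-- The quadrilateral inequality: the squares of the diagonals have sum at most the sum of the
squares of the sides. -/
theorem sq_dist_add_sq_dist_le (h : CAT0Space X) (a b c d : X) :
    dist a c ^ 2 + dist b d ^ 2 ≤ dist a b ^ 2 + dist b c ^ 2 + dist c d ^ 2 + dist d a ^ 2 := by
  obtain ⟨m, hm⟩ := exists_isMid h.1 a c
  have h1 := h.2 b a c m hm.1 hm.2
  have h2 := h.2 d a c m hm.1 hm.2
  have h3 : dist b d ^ 2 ≤ (dist b m + dist d m) ^ 2 :=
    pow_le_pow_left₀ dist_nonneg (dist_triangle_right b d m) 2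
  rw [dist_comm b a] at h1
  rw [dist_comm d c] at h2
  nlinarith [sq_nonneg (dist b m - dist d m)]

/-- A midpoint convex function on `[0,1]` that is bounded above is at most the maximum of its
end values. No continuity is needed: each use of convexity halves the excess of the bound. -/
theorem le_of_midpoint_convex {f : ℝ → ℝ} {M K : ℝ}
    (hK : ∀ t ∈ Icc (0 : ℝ) 1, f t ≤ M + K)
    (hf : ∀ s ∈ Icc (0 : ℝ) 1, ∀ t ∈ Icc (0 : ℝ) 1, f ((s + t) / 2) ≤ (f s + f t) / 2)
    (h0 : f 0 ≤ M) (h1 : f 1 ≤ M) : ∀ t ∈ Icc (0 : ℝ) 1, f t ≤ M := by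
  have key : ∀ n : ℕ, ∀ t ∈ Icc (0 : ℝ) 1, f t ≤ M + K * (1 / 2) ^ n := by
    intro n
    induction n with
    | zero => simpa using hK
    | succ n ih =>
      intro t ht
      rw [pow_succ]
      rcases le_total t (1 / 2) with h | h
      · have a := ih (2 * t) ⟨by linarith [ht.1], by linarith⟩
        have b := hf 0 ⟨le_rfl, zero_le_one⟩ (2 * t) ⟨by linarith [ht.1], by linarith⟩
        rw [show (0 + 2 * t) / 2 = t by ring] at b
        linarith
      · have a := ih (2 * t - 1) ⟨by linarith, by linarith [ht.2]⟩
        have b := hf 1 ⟨zero_le_one, le_rfl⟩ (2 * t - 1) ⟨by linarith, by linarith [ht.2]⟩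
        rw [show (1 + (2 * t - 1)) / 2 = t by ring] at b
        linarith
  intro t ht
  have hl : Tendsto (fun n : ℕ => M + K * (1 / 2 : ℝ) ^ n) atTop (𝓝 (M + K * 0)) :=
    ((tendsto_pow_atTop_nhds_zero_of_lt_one (by norm_num) (by norm_num)).const_mul K).const_add M
  rw [mul_zero, add_zero] at hl
  exact ge_of_tendsto' hl fun n => key n t ht

theorem isMid_of_isometric {γ : ℝ → X} {S : Set ℝ}
    (hγ : ∀ s ∈ S, ∀ t ∈ S, dist (γ s) (γ t) = |s - t|) {a b : ℝ} (ha : a ∈ S) (hb : b ∈ S)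
    (hab : (a + b) / 2 ∈ S) : IsMid (γ ((a + b) / 2)) (γ a) (γ b) := by
  constructor
  · rw [hγ _ ha _ hab, hγ _ ha _ hb, show a - (a + b) / 2 = (a - b) / 2 by ring, abs_div]
    norm_num
  · rw [hγ _ hab _ hb, hγ _ ha _ hb, show (a + b) / 2 - b = (a - b) / 2 by ring, abs_div]
    norm_num

/-! ### Existence of rays with prescribed origin and endpoint -/

/-- A segment from `x` to a point `c L` of a ray stays within `2 * dist x (c 0)` of the ray, when
both are parametrized by arc length. -/
theorem dist_segment_ray_le (h : CAT0Space X) {c σ : ℝ → X} (hc : IsGeodesicRay c) {x : X}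
    {L : ℝ} (hL : 0 ≤ L) (h0 : σ 0 = x) (h1 : σ (dist x (c L)) = c L)
    (hσ : ∀ s ∈ Icc (0 : ℝ) (dist x (c L)), ∀ t ∈ Icc (0 : ℝ) (dist x (c L)),
      dist (σ s) (σ t) = |s - t|) {t : ℝ} (ht : t ∈ Icc (0 : ℝ) (dist x (c L))) :
    dist (σ t) (c t) ≤ 2 * dist x (c 0) := by
  set d := dist x (c L) with hd
  have hd0 : 0 ≤ d := dist_nonneg
  rcases hd0.eq_or_lt with hz | hpos
  · have : t = 0 := le_antisymm (hz ▸ ht.2) ht.1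
    rw [this, h0]
    linarith [dist_nonneg (x := x) (y := c 0)]
  have hmem : ∀ l ∈ Icc (0 : ℝ) 1, l * d ∈ Icc 0 d := fun l hl =>
    ⟨mul_nonneg hl.1 hd0, mul_le_of_le_one_left hd0 hl.2⟩
  have hcL : dist (c 0) (c L) = L := by
    rw [hc 0 L le_rfl hL, abs_sub_comm, sub_zero, abs_of_nonneg hL]
  have hlen : |L - d| ≤ dist x (c 0) := by
    have := abs_dist_sub_le (c 0) x (c L)
    rwa [hcL, ← hd, dist_comm] at this
  -- Parametrized proportionally to arc length, the two geodesics end at the same point.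
  have hconv : ∀ l ∈ Icc (0 : ℝ) 1, dist (σ (l * d)) (c (l * L)) ≤ dist x (c 0) := by
    refine le_of_midpoint_convex (f := fun l => dist (σ (l * d)) (c (l * L))) (K := d + L)
      ?_ ?_ (by simp [h0]) ?_
    · intro l hl
      have a1 := hσ _ (hmem l hl) 0 ⟨le_rfl, hd0⟩
      have a2 := hc 0 (l * L) le_rfl (mul_nonneg hl.1 hL)
      rw [sub_zero, abs_of_nonneg (hmem l hl).1, h0] at a1
      rw [abs_sub_comm, sub_zero, abs_of_nonneg (mul_nonneg hl.1 hL)] at a2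
      have a3 := (hmem l hl).2
      have a4 := mul_le_of_le_one_left hL hl.2
      linarith [dist_triangle4 (σ (l * d)) x (c 0) (c (l * L))]
    · intro s hs t ht
      have hst : (s + t) / 2 ∈ Icc (0 : ℝ) 1 :=
        ⟨by linarith [hs.1, ht.1], by linarith [hs.2, ht.2]⟩
      have e1 : (s + t) / 2 * d = (s * d + t * d) / 2 := by ring
      have e2 : (s + t) / 2 * L = (s * L + t * L) / 2 := by ring
      have m1 := hmem _ hst
      have m2 : 0 ≤ (s + t) / 2 * L := mul_nonneg hst.1 hL
      simp only [e1, e2] at m1 m2 ⊢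
      exact dist_mid_mid_le h (isMid_of_isometric hσ (hmem s hs) (hmem t ht) m1)
        (isMid_of_isometric (S := Ici 0) (fun s hs t ht => hc s t hs ht)
          (mul_nonneg hs.1 hL) (mul_nonneg ht.1 hL) m2)
    · simp [h1]
  have hl : t / d ∈ Icc (0 : ℝ) 1 := ⟨div_nonneg ht.1 hd0, (div_le_one hpos).2 ht.2⟩
  have b1 := hconv _ hl
  rw [div_mul_cancel₀ t hpos.ne'] at b1
  have b2 : dist (c (t / d * L)) (c t) ≤ dist x (c 0) := by
    rw [hc _ _ (mul_nonneg hl.1 hL) ht.1]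
    have : t / d * L - t = t / d * (L - d) := by
      rw [mul_sub, div_mul_cancel₀ t hpos.ne']
    rw [this, abs_mul, abs_of_nonneg hl.1]
    exact (mul_le_of_le_one_left (abs_nonneg _) hl.2).trans hlen
  linarith [dist_triangle (σ t) (c (t / d * L)) (c t)]

/-- Every ray `c` is asymptotic to a ray issuing from any given point `x`: an ultralimit of the
segments from `x` to `c n`, which exists pointwise because balls are compact. -/
theorem exists_asymptotic_ray [ProperSpace X] (h : CAT0Space X) {c : ℝ → X}
    (hc : IsGeodesicRay c) (x : X) :
    ∃ γ : ℝ → X, γ 0 = x ∧ IsGeodesicRay γ ∧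
      ∃ C : ℝ, ∀ t : ℝ, 0 ≤ t → dist (γ t) (c t) ≤ C := by
  choose σ h0 h1 hσ using fun n : ℕ => h.1 x (c n)
  have hU : (hyperfilter ℕ : Filter ℕ) ≤ atTop := Nat.hyperfilter_le_atTop
  have hdn : ∀ t : ℝ, ∀ᶠ n : ℕ in (hyperfilter ℕ : Filter ℕ), t ≤ dist x (c n) := by
    intro t
    apply hU
    filter_upwards [eventually_ge_atTop ⌈t + dist (c 0) x⌉₊] with n hn
    have a1 : t + dist (c 0) x ≤ n := Nat.ceil_le.1 hn
    have a2 := hc 0 n le_rfl n.cast_nonneg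
    rw [abs_sub_comm, sub_zero, abs_of_nonneg n.cast_nonneg] at a2
    linarith [dist_triangle (c 0) x (c n)]
  have hlim : ∀ t : ℝ, ∃ p : X, 0 ≤ t →
      Tendsto (fun n => σ n t) (hyperfilter ℕ : Filter ℕ) (𝓝 p) := by
    intro t
    by_cases ht : 0 ≤ t
    swap
    · exact ⟨x, fun h => absurd h ht⟩
    have hmem : ((hyperfilter ℕ).map fun n => σ n t : Filter X) ≤ 𝓟 (Metric.closedBall x t) := by
      rw [le_principal_iff]
      change ∀ᶠ n in (hyperfilter ℕ : Filter ℕ), σ n t ∈ Metric.closedBall x t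
      filter_upwards [hdn t] with n hn
      have := hσ n t ⟨ht, hn⟩ 0 ⟨le_rfl, dist_nonneg⟩
      rw [h0, sub_zero, abs_of_nonneg ht] at this
      exact this.le
    obtain ⟨p, -, hp⟩ := (isCompact_closedBall x t).ultrafilter_le_nhds _ hmem
    exact ⟨p, fun _ => hp⟩
  choose γ hγ using hlim
  refine ⟨γ, ?_, ?_, 2 * dist x (c 0), ?_⟩
  · have := hγ 0 le_rfl
    simp only [h0] at this
    exact tendsto_nhds_unique this tendsto_const_nhds
  · intro s t hs ht
    refine tendsto_nhds_unique ((hγ s hs).dist (hγ t ht)) ?_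
    refine tendsto_const_nhds.congr' ?_
    filter_upwards [hdn s, hdn t] with n hns hnt
    exact (hσ n s ⟨hs, hns⟩ t ⟨ht, hnt⟩).symm
  · intro t ht
    refine le_of_tendsto ((hγ t ht).dist tendsto_const_nhds) ?_
    filter_upwards [hdn t] with n hn
    exact dist_segment_ray_le h hc n.cast_nonneg (h0 n) (h1 n) (hσ n) ⟨ht, hn⟩

theorem rayFrom_spec [ProperSpace X] (h : CAT0Space X) (x : X) (ξ : Boundary X) :
    rayFrom x ξ 0 = x ∧ ∃ hγ : IsGeodesicRay (rayFrom x ξ), boundaryPoint hγ = ξ := by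
  have hex : ∃ γ : ℝ → X, γ 0 = x ∧ ∃ hγ : IsGeodesicRay γ, boundaryPoint hγ = ξ := by
    induction ξ using Quotient.inductionOn with
    | h c =>
      obtain ⟨γ, hx, hγ, hC⟩ := exists_asymptotic_ray h c.2 x
      exact ⟨γ, hx, hγ, Quotient.sound hC⟩
  rw [rayFrom, dif_pos hex]
  exact hex.choose_spec

theorem boundaryPoint_eq_iff {γ γ' : ℝ → X} (h : IsGeodesicRay γ) (h' : IsGeodesicRay γ') :
    boundaryPoint h = boundaryPoint h' ↔
      ∃ C : ℝ, ∀ t : ℝ, 0 ≤ t → dist (γ t) (γ' t) ≤ C :=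
  Quotient.eq

/-! ### Busemann functions of rays -/

/-- The Busemann function of a ray `α`, normalized to vanish at `α 0`. As `t ↦ dist y (α t) - t`
is antitone and bounded below on `[0, ∞)`, the limit is encoded as an infimum. -/
def bus (α : ℝ → X) (y : X) : ℝ := ⨅ t : {t : ℝ // 0 ≤ t}, (dist y (α t.1) - t.1)

theorem IsGeodesicRay.dist_zero {α : ℝ → X} (hα : IsGeodesicRay α) {t : ℝ} (ht : 0 ≤ t) :
    dist (α 0) (α t) = t := by
  rw [hα 0 t le_rfl ht, abs_sub_comm, sub_zero, abs_of_nonneg ht]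

theorem busemann_eq_bus [ProperSpace X] (h : CAT0Space X) (x y : X) (ξ : Boundary X) :
    busemann x y ξ = bus (rayFrom x ξ) y := by
  obtain ⟨h0, hγ, -⟩ := rayFrom_spec h x ξ
  refine iInf_congr fun t => ?_
  have := hγ.dist_zero t.2
  rw [h0] at this
  rw [this]

theorem bus_le {α : ℝ → X} (hα : IsGeodesicRay α) (y : X) {t : ℝ} (ht : 0 ≤ t) :
    bus α y ≤ dist y (α t) - t := by
  refine ciInf_le (f := fun t : {t : ℝ // 0 ≤ t} => dist y (α t.1) - t.1)
    ⟨-dist y (α 0), ?_⟩ ⟨t, ht⟩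
  rintro _ ⟨s, rfl⟩
  have h1 := hα.dist_zero s.2
  have h2 := dist_triangle (α 0) y (α s.1)
  rw [dist_comm (α 0) y] at h2
  simp only
  linarith

theorem le_bus {α : ℝ → X} {y : X} {b : ℝ} (h : ∀ t : ℝ, 0 ≤ t → b ≤ dist y (α t) - t) :
    b ≤ bus α y :=
  haveI : Nonempty {t : ℝ // 0 ≤ t} := ⟨⟨0, le_rfl⟩⟩
  le_ciInf fun t => h t.1 t.2

/-- The infimum defining the Busemann function is a limit. -/
theorem bus_tail {α : ℝ → X} (hα : IsGeodesicRay α) (y : X) {ε : ℝ} (hε : 0 < ε) :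
    ∃ T : ℝ, 0 ≤ T ∧ ∀ t, T ≤ t → dist y (α t) < bus α y + t + ε := by
  have : Nonempty {t : ℝ // 0 ≤ t} := ⟨⟨0, le_rfl⟩⟩
  obtain ⟨⟨T, hT⟩, h⟩ := exists_lt_of_ciInf_lt
    (f := fun t : {t : ℝ // 0 ≤ t} => dist y (α t.1) - t.1) (lt_add_of_pos_right (bus α y) hε)
  refine ⟨T, hT, fun t ht => ?_⟩
  have h1 := hα T t hT (hT.trans ht)
  rw [abs_sub_comm, abs_of_nonneg (sub_nonneg.2 ht)] at h1
  simp only at h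
  linarith [dist_triangle y (α T) (α t)]

theorem bus_le_add_dist {α : ℝ → X} (hα : IsGeodesicRay α) (y z : X) :
    bus α y ≤ bus α z + dist y z := by
  suffices bus α y - dist y z ≤ bus α z by linarith
  exact le_bus fun t ht => by linarith [bus_le hα y ht, dist_triangle y z (α t)]

theorem bus_mid_le (h : CAT0Space X) {α : ℝ → X} (hα : IsGeodesicRay α) {m a b : X}
    (hm : IsMid m a b) : bus α m ≤ (bus α a + bus α b) / 2 := by
  refine le_of_forall_pos_le_add fun ε hε => ?_
  obtain ⟨S, hS, hS'⟩ := bus_tail hα a hε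
  obtain ⟨T, hT, hT'⟩ := bus_tail hα b hε
  have h1 := hS' _ (le_max_left S T)
  have h2 := hT' _ (le_max_right S T)
  have h3 := bus_le hα m (hS.trans (le_max_left S T))
  have h4 := dist_mid_le h (α (max S T)) hm
  rw [dist_comm _ m, dist_comm _ a, dist_comm _ b] at h4
  linarith

/-- Along a ray `c` asymptotic to `α`, the Busemann function of `α` decreases at unit speed: the
function `s ↦ bus α (c s) + s` is nondecreasing, bounded above and midpoint convex, hence
constant. -/
theorem bus_along (h : CAT0Space X) {α c : ℝ → X} (hα : IsGeodesicRay α) (hc : IsGeodesicRay c)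
    (hC : ∃ C : ℝ, ∀ t : ℝ, 0 ≤ t → dist (c t) (α t) ≤ C) {s : ℝ} (hs : 0 ≤ s) :
    bus α (c s) = bus α (c 0) - s := by
  obtain ⟨C, hC⟩ := hC
  apply le_antisymm
  · by_contra! hlt
    set δ := bus α (c s) + s - bus α (c 0) with hδ
    have hδ0 : 0 < δ := by linarith
    -- A positive increment at least doubles each time the parameter is doubled.
    have grow : ∀ n : ℕ, δ * 2 ^ n ≤ bus α (c (2 ^ n * s)) + 2 ^ n * s - bus α (c 0) := by
      intro n
      induction n with
      | zero => simp [hδ]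
      | succ n ih =>
        have hp : (0 : ℝ) ≤ 2 ^ n * s := by positivity
        have hp' : (0 : ℝ) ≤ 2 ^ (n + 1) * s := by positivity
        have e : (0 + 2 ^ (n + 1) * s) / 2 = 2 ^ n * s := by rw [pow_succ]; ring
        have hm := isMid_of_isometric (S := Ici 0) (fun s hs t ht => hc s t hs ht)
          (a := 0) (b := 2 ^ (n + 1) * s) self_mem_Ici hp' (by rw [e]; exact hp)
        rw [e] at hm
        have := bus_mid_le h hα hm
        rw [pow_succ] at this ⊢
        linarith
    have bdd : ∀ n : ℕ, δ * 2 ^ n ≤ C - bus α (c 0) := by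
      intro n
      have hp : (0 : ℝ) ≤ 2 ^ n * s := by positivity
      linarith [grow n, bus_le hα (c (2 ^ n * s)) hp, hC _ hp]
    obtain ⟨n, hn⟩ := pow_unbounded_of_one_lt ((C - bus α (c 0)) / δ) (one_lt_two (α := ℝ))
    rw [div_lt_iff₀ hδ0] at hn
    linarith [bdd n]
  · have := bus_le_add_dist hα (c 0) (c s)
    rw [hc.dist_zero hs] at this
    linarith

/-- Busemann functions of asymptotic rays differ by a constant. -/
theorem bus_eq_add (h : CAT0Space X) {α c : ℝ → X} (hα : IsGeodesicRay α) (hc : IsGeodesicRay c)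
    (hC : ∃ C : ℝ, ∀ t : ℝ, 0 ≤ t → dist (c t) (α t) ≤ C) (y : X) :
    bus α y = bus α (c 0) + bus c y := by
  have hC' : ∃ C : ℝ, ∀ t : ℝ, 0 ≤ t → dist (α t) (c t) ≤ C := by
    obtain ⟨C, hC⟩ := hC
    exact ⟨C, fun t ht => by rw [dist_comm]; exact hC t ht⟩
  have key : ∀ {β γ : ℝ → X}, IsGeodesicRay β → IsGeodesicRay γ →
      (∃ C : ℝ, ∀ t : ℝ, 0 ≤ t → dist (γ t) (β t) ≤ C) → ∀ z, bus β z ≤ bus β (γ 0) + bus γ z := by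
    intro β γ hβ hγ hb z
    suffices bus β z - bus β (γ 0) ≤ bus γ z by linarith
    refine le_bus fun t ht => ?_
    linarith [bus_le_add_dist hβ z (γ t), bus_along h hβ hγ hb ht]
  have h2 := key hc hα hC' y
  have h1 := key hα hc hC y
  -- It remains to bound the sum of the two constants. The squared diagonals of the quadrilateral
  -- `α 0, α t, c t, c 0` have sum at most `2 * t ^ 2 + O(1)`, so the diagonals have sum at most
  -- `2 * t + o(1)`.
  have h3 : bus α (c 0) + bus c (α 0) ≤ 0 := by
    by_contra! hδ
    set δ := bus α (c 0) + bus c (α 0) with hδ'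
    obtain ⟨C, hC⟩ := hC
    set E := dist (c 0) (α 0) ^ 2 + C ^ 2 with hE
    have hE0 : 0 ≤ E := by positivity
    have ht : 0 ≤ E / δ := div_nonneg hE0 hδ.le
    set t := E / δ with ht'
    have htδ : t * δ = E := div_mul_cancel₀ E hδ.ne'
    have a1 := bus_le hα (c 0) ht
    have a2 := bus_le hc (α 0) ht
    have a3 := sq_dist_add_sq_dist_le h (c 0) (α 0) (α t) (c t)
    rw [hα.dist_zero ht, dist_comm (c t), hc.dist_zero ht] at a3
    have a4 : dist (α t) (c t) ^ 2 ≤ C ^ 2 := by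
      rw [dist_comm]
      exact pow_le_pow_left₀ dist_nonneg (hC t ht) 2
    have a5 : 2 * t + δ ≤ dist (c 0) (α t) + dist (α 0) (c t) := by linarith
    have a6 : (2 * t + δ) ^ 2 ≤ (dist (c 0) (α t) + dist (α 0) (c t)) ^ 2 :=
      pow_le_pow_left₀ (by linarith) a5 2
    nlinarith [sq_nonneg (dist (c 0) (α t) - dist (α 0) (c t)), sq_pos_of_pos hδ]
  linarith

/-! ### Lines joining two boundary points -/

/-- On a line from the endpoint of `α` to the endpoint of `β` the sum `bus α + bus β` attains its
minimum. -/
theorem bus_add_bus_ge (h : CAT0Space X) {α β γ : ℝ → X} (hα : IsGeodesicRay α)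
    (hβ : IsGeodesicRay β) (hγ : IsGeodesicLine γ)
    (h1 : ∃ C : ℝ, ∀ t : ℝ, 0 ≤ t → dist (γ (-t)) (α t) ≤ C)
    (h2 : ∃ C : ℝ, ∀ t : ℝ, 0 ≤ t → dist (γ t) (β t) ≤ C) (y : X) :
    bus α (γ 0) + bus β (γ 0) ≤ bus α y + bus β y := by
  have e1 := bus_eq_add h hα hγ.rayNeg h1 y
  have e2 := bus_eq_add h hβ hγ.ray h2 y
  simp only [neg_zero] at e1
  suffices 0 ≤ bus (fun t => γ (-t)) y + bus γ y by linarith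
  refine le_of_forall_pos_le_add fun ε hε => ?_
  obtain ⟨S, hS, hS'⟩ := bus_tail hγ.rayNeg y (half_pos hε)
  obtain ⟨T, hT, hT'⟩ := bus_tail hγ.ray y (half_pos hε)
  have a1 := hS' _ (le_max_left S T)
  have a2 := hT' _ (le_max_right S T)
  have a0 : 0 ≤ max S T := hS.trans (le_max_left S T)
  have a3 := hγ (-max S T) (max S T)
  rw [abs_sub_comm, abs_of_nonneg (by linarith)] at a3
  have a4 := dist_triangle_left (γ (-max S T)) (γ (max S T)) y
  linarith

/-- Along a line whose positive end is asymptotic to `α`, the Busemann function of `α` is affine of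
slope `-1`, for negative times too. -/
theorem bus_along_line (h : CAT0Space X) {α γ : ℝ → X} (hα : IsGeodesicRay α)
    (hγ : IsGeodesicLine γ) (h2 : ∃ C : ℝ, ∀ t : ℝ, 0 ≤ t → dist (γ t) (α t) ≤ C) (t : ℝ) :
    bus α (γ t) = bus α (γ 0) - t := by
  rcases le_total 0 t with ht | ht
  · exact bus_along h hα hγ.ray h2 ht
  · -- For negative times, restart the line at `γ t`.
    obtain ⟨C, hC⟩ := h2
    have hr : IsGeodesicRay fun s => γ (s + t) := fun a b _ _ => by
      simp only [hγ (a + t) (b + t), add_sub_add_right_eq_sub]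
    have := bus_along h hα hr ⟨C + |t|, fun s hs => by
      have a1 := hγ (s + t) s
      rw [add_sub_cancel_left] at a1
      linarith [hC s hs, dist_triangle (γ (s + t)) (γ s) (α s)]⟩ (neg_nonneg.2 ht)
    simp only [neg_add_cancel, zero_add] at this
    linarith

/-- If `bus α + bus β` is minimal at `p`, then rays from `p` asymptotic to `α` and `β` fit together
to a line: along their concatenation `bus α` grows at unit speed and it is 1-Lipschitz. -/
theorem isGeodesicLine_concat (h : CAT0Space X) {α β r₁ r₂ : ℝ → X} {p : X}
    (hα : IsGeodesicRay α) (hβ : IsGeodesicRay β) (hr₁ : IsGeodesicRay r₁)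
    (hr₂ : IsGeodesicRay r₂) (h₁ : r₁ 0 = p) (h₂ : r₂ 0 = p)
    (hC₁ : ∃ C : ℝ, ∀ t : ℝ, 0 ≤ t → dist (r₁ t) (α t) ≤ C)
    (hC₂ : ∃ C : ℝ, ∀ t : ℝ, 0 ≤ t → dist (r₂ t) (β t) ≤ C)
    (hmin : ∀ y, bus α p + bus β p ≤ bus α y + bus β y) :
    IsGeodesicLine fun t => if t ≤ 0 then r₁ (-t) else r₂ t := by
  have hcross : ∀ s t : ℝ, 0 ≤ s → 0 ≤ t → dist (r₁ s) (r₂ t) = s + t := by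
    intro s t hs ht
    apply le_antisymm
    · have a1 := hr₁.dist_zero hs
      have a2 := hr₂.dist_zero ht
      rw [h₁] at a1
      rw [h₂] at a2
      linarith [dist_triangle_left (r₁ s) (r₂ t) p]
    · have b1 := bus_along h hα hr₁ hC₁ hs
      have b2 := bus_along h hβ hr₂ hC₂ ht
      rw [h₁] at b1
      rw [h₂] at b2
      have b3 := hmin (r₂ t)
      have b4 := bus_le_add_dist hα (r₂ t) (r₁ s)
      rw [dist_comm] at b4
      linarith
  intro s t
  simp only
  split_ifs with hs ht ht
  · rw [hr₁ _ _ (by linarith) (by linarith), neg_sub_neg, abs_sub_comm]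
  · rw [hcross _ _ (by linarith) (by linarith), abs_sub_comm, abs_of_nonneg (by linarith)]
    ring
  · rw [dist_comm, hcross _ _ (by linarith) (by linarith), abs_of_nonneg (by linarith)]
    ring
  · exact hr₂ _ _ (by linarith) (by linarith)

/-! ### The Gromov product and horoballs -/

theorem gromov_eq_mSup [ProperSpace X] (h : CAT0Space X) (x : X) (ξ η : Boundary X) :
    gromov x ξ η = mSup x ξ η := by
  obtain ⟨-, hα, -⟩ := rayFrom_spec h x ξ
  obtain ⟨-, hβ, -⟩ := rayFrom_spec h x η
  apply le_antisymm
  · refine iSup₂_le fun t ht => ?_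
    -- The midpoint of `ξ_x(t)` and `η_x(t)` lies in both horoballs at the level of the product.
    obtain ⟨y, hy1, hy2⟩ := exists_isMid h.1 (rayFrom x ξ t) (rayFrom x η t)
    refine le_iSup₂_of_le (t - dist (rayFrom x ξ t) (rayFrom x η t) / 2) ⟨y, ?_, ?_⟩ le_rfl
    · rw [busemann_eq_bus h]
      have := bus_le hα y ht
      rw [dist_comm, hy1] at this
      linarith
    · rw [busemann_eq_bus h]
      have := bus_le hβ y ht
      rw [hy2] at this
      linarith
  · refine iSup₂_le fun m ⟨y, hy1, hy2⟩ => ?_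
    rw [busemann_eq_bus h] at hy1 hy2
    refine EReal.ge_of_forall_gt_iff_ge.1 fun z hz => ?_
    have hz' : 0 < m - z := sub_pos.2 (EReal.coe_lt_coe_iff.1 hz)
    obtain ⟨S, hS, hS'⟩ := bus_tail hα y hz'
    obtain ⟨T, -, hT'⟩ := bus_tail hβ y hz'
    refine le_iSup₂_of_le (max S T) (hS.trans (le_max_left S T)) (EReal.coe_le_coe_iff.2 ?_)
    have a1 := hS' _ (le_max_left S T)
    have a2 := hT' _ (le_max_right S T)
    have a3 := dist_triangle_left (rayFrom x ξ (max S T)) (rayFrom x η (max S T)) y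
    linarith

end Aux

/-- `(ξ|η)_x = m_x(ξ,η)`. Moreover, if `(ξ,η)` is visible then every
bi-infinite geodesic from `ξ` to `η` contains a point of the intersection of the two
bounding horospheres `∂h_{-m} ∩ ∂h'_{-m}`, and every point of `h_{-m} ∩ h'_{-m}` lies on
some bi-infinite geodesic from `ξ` to `η` (where `m = m_x(ξ,η)`). -/
theorem statement3 (X : Type*) [MetricSpace X] [ProperSpace X] [ConnectedSpace X]
    (hcat : CAT0Space X) (hgc : GeodesicallyComplete X)
    (x : X) (ξ η : Boundary X) :
    gromov x ξ η = mSup x ξ η ∧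
      (VisiblePair ξ η → ∃ m : ℝ, (m : EReal) = mSup x ξ η ∧
        (∀ (γ : ℝ → X) (h : IsGeodesicLine γ),
          boundaryPoint h.rayNeg = ξ → boundaryPoint h.ray = η →
            ∃ t : ℝ, busemann x (γ t) ξ = -m ∧ busemann x (γ t) η = -m) ∧
        (∀ p : X, busemann x p ξ ≤ -m → busemann x p η ≤ -m →
          ∃ (γ : ℝ → X) (h : IsGeodesicLine γ),
            boundaryPoint h.rayNeg = ξ ∧ boundaryPoint h.ray = η ∧ ∃ t : ℝ, γ t = p)) := by
  refine ⟨gromov_eq_mSup hcat x ξ η, ?_⟩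
  obtain ⟨-, hα, hξ⟩ := rayFrom_spec hcat x ξ
  obtain ⟨-, hβ, hη⟩ := rayFrom_spec hcat x η
  simp only [busemann_eq_bus hcat]
  -- Each line from `ξ` to `η` has a point where both Busemann functions equal half of the minimal
  -- value of their sum.
  have hline : ∀ (γ : ℝ → X) (h : IsGeodesicLine γ), boundaryPoint h.rayNeg = ξ →
      boundaryPoint h.ray = η → ∃ t : ℝ,
        bus (rayFrom x ξ) (γ t) = bus (rayFrom x η) (γ t) ∧
        ∀ y, bus (rayFrom x ξ) (γ t) + bus (rayFrom x η) (γ t) ≤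
          bus (rayFrom x ξ) y + bus (rayFrom x η) y := by
    intro γ h hγξ hγη
    have h1 := (boundaryPoint_eq_iff h.rayNeg hα).1 (hγξ.trans hξ.symm)
    have h2 := (boundaryPoint_eq_iff h.ray hβ).1 (hγη.trans hη.symm)
    have hneg : IsGeodesicLine fun t => γ (-t) := fun s t => by
      rw [h (-s) (-t), neg_sub_neg, abs_sub_comm]
    set t := (bus (rayFrom x η) (γ 0) - bus (rayFrom x ξ) (γ 0)) / 2 with ht
    have b1 := bus_along_line hcat hα hneg h1 (-t)
    have b2 := bus_along_line hcat hβ h h2 t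
    simp only [neg_neg, neg_zero] at b1
    refine ⟨t, by linarith, fun y => ?_⟩
    linarith [bus_add_bus_ge hcat hα hβ h h1 h2 y]
  rintro ⟨γ₀, hγ₀, hγ₀ξ, hγ₀η⟩
  obtain ⟨t₀, heq₀, hmin₀⟩ := hline γ₀ hγ₀ hγ₀ξ hγ₀η
  refine ⟨-bus (rayFrom x ξ) (γ₀ t₀), ?_, ?_, ?_⟩
  · apply le_antisymm
    · refine le_iSup₂_of_le (-bus (rayFrom x ξ) (γ₀ t₀)) ⟨γ₀ t₀, ?_, ?_⟩ le_rfl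
      · rw [busemann_eq_bus hcat, neg_neg]
      · rw [busemann_eq_bus hcat, neg_neg, heq₀]
    · refine iSup₂_le fun m ⟨y, hy1, hy2⟩ => EReal.coe_le_coe_iff.2 ?_
      rw [busemann_eq_bus hcat] at hy1 hy2
      linarith [hmin₀ y]
  · intro γ h hγξ hγη
    obtain ⟨t, heq, hmin⟩ := hline γ h hγξ hγη
    have a1 := hmin (γ₀ t₀)
    have a2 := hmin₀ (γ t)
    exact ⟨t, by linarith, by linarith⟩
  · intro p hp1 hp2
    obtain ⟨h₁, hr₁, hr₁ξ⟩ := rayFrom_spec hcat p ξ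
    obtain ⟨h₂, hr₂, hr₂η⟩ := rayFrom_spec hcat p η
    have hσ := isGeodesicLine_concat hcat hα hβ hr₁ hr₂ h₁ h₂
      ((boundaryPoint_eq_iff hr₁ hα).1 (hr₁ξ.trans hξ.symm))
      ((boundaryPoint_eq_iff hr₂ hβ).1 (hr₂η.trans hη.symm))
      (fun y => by linarith [hmin₀ y])
    refine ⟨_, hσ, ?_, ?_, 0, ?_⟩
    · refine Eq.trans ((boundaryPoint_eq_iff hσ.rayNeg hr₁).2 ?_) hr₁ξ
      refine ⟨0, fun t ht => ?_⟩
      simp [ht]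
    · refine Eq.trans ((boundaryPoint_eq_iff hσ.ray hr₂).2 ?_) hr₂η
      refine ⟨0, fun t ht => ?_⟩
      rcases ht.eq_or_lt with rfl | ht
      · simp [h₁, h₂]
      · simp [not_le.2 ht]
    · simp [h₁]

end Paper
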